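/- arXiv:1502.07263 — 2 statements merged into one kernel-verified Lean document; each statement's English description precedes it below -/
import Mathlib

section
/- Fix d ∈ ℕ, a smooth function U : ℝ^d → ℝ with ‖∇²U‖_∞ < ∞, and a constant σ > 0, and let L be the kinetic Langevin operator L h = −y·∇_x h + (∇U(x) − y/σ)·∇_y h + Δ_y h. Then for every smooth h : ℝ^d × ℝ^d → ℝ, pointwise on ℝ^d × ℝ^d, (1/2) L(|∇h|²) − ∇h·∇(Lh) ≥ −(‖∇²U‖_∞ + 1 + 1/σ) |∇h|², where ∇ = (∇_x, ∇_y) is the full gradient in the 2d variables. -/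
noncomputable section

open scoped BigOperators

open scoped BigOperators

/-- Partial derivative in the `i`-th `x`-direction of `f : ℝ^d × ℝ^d → ℝ`. -/
def pdx {d : ℕ} (i : Fin d) (f : (Fin d → ℝ) × (Fin d → ℝ) → ℝ)
    (z : (Fin d → ℝ) × (Fin d → ℝ)) : ℝ :=
  fderiv ℝ f z (Pi.single i (1 : ℝ), 0)

/-- Partial derivative in the `i`-th `y`-direction of `f : ℝ^d × ℝ^d → ℝ`. -/
def pdy {d : ℕ} (i : Fin d) (f : (Fin d → ℝ) × (Fin d → ℝ) → ℝ)
    (z : (Fin d → ℝ) × (Fin d → ℝ)) : ℝ :=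
  fderiv ℝ f z (0, Pi.single i (1 : ℝ))

/-- `i`-th component of `∇U`. -/
def gradU {d : ℕ} (U : (Fin d → ℝ) → ℝ) (i : Fin d) (x : Fin d → ℝ) : ℝ :=
  fderiv ℝ U x (Pi.single i (1 : ℝ))

/-- `(i,j)` entry of the Hessian matrix `∇²U`. -/
def hessU {d : ℕ} (U : (Fin d → ℝ) → ℝ) (i j : Fin d) (x : Fin d → ℝ) : ℝ :=
  fderiv ℝ (fun u => fderiv ℝ U u (Pi.single j (1 : ℝ))) x (Pi.single i (1 : ℝ))

/-- The kinetic Langevin operator `L h = −y·∇ₓh + (∇U(x) − y/σ)·∇_y h + Δ_y h`. -/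
def langevin {d : ℕ} (U : (Fin d → ℝ) → ℝ) (σ : ℝ)
    (f : (Fin d → ℝ) × (Fin d → ℝ) → ℝ) (z : (Fin d → ℝ) × (Fin d → ℝ)) : ℝ :=
  (∑ i, -(z.2 i) * pdx i f z)
    + (∑ i, (gradU U i z.1 - z.2 i / σ) * pdy i f z)
    + ∑ i, pdy i (fun w => pdy i f w) z

/-- The supremum over x of the Frobenius norm of the Hessian of U, i.e. ‖∇²U‖_∞. -/
def hessNormInf {d : ℕ} (U : (Fin d → ℝ) → ℝ) : ℝ :=
  ⨆ x : Fin d → ℝ, Real.sqrt (∑ i, ∑ j, (hessU U i j x) ^ 2)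

/-- Directional derivative. -/
def DD {d : ℕ} (v : (Fin d → ℝ) × (Fin d → ℝ)) (f : (Fin d → ℝ) × (Fin d → ℝ) → ℝ)
    (z : (Fin d → ℝ) × (Fin d → ℝ)) : ℝ := fderiv ℝ f z v

theorem DD_smooth {d : ℕ} (v : (Fin d → ℝ) × (Fin d → ℝ))
    {f : (Fin d → ℝ) × (Fin d → ℝ) → ℝ} (hf : ContDiff ℝ (⊤ : ℕ∞) f) :
    ContDiff ℝ (⊤ : ℕ∞) (DD v f) := by
  have h1 : ContDiff ℝ (⊤ : ℕ∞) (fderiv ℝ f) := hf.fderiv_right (by norm_num)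
  exact h1.clm_apply contDiff_const

theorem smooth_diff {E : Type*} [NormedAddCommGroup E] [NormedSpace ℝ E] {f : E → ℝ}
    (hf : ContDiff ℝ (⊤ : ℕ∞) f) : Differentiable ℝ f := hf.differentiable (by norm_num)

theorem DD_comm {d : ℕ} (v w : (Fin d → ℝ) × (Fin d → ℝ))
    {f : (Fin d → ℝ) × (Fin d → ℝ) → ℝ} (hf : ContDiff ℝ (⊤ : ℕ∞) f) :
    DD v (DD w f) = DD w (DD v f) := by
  have h1 : ContDiff ℝ (⊤ : ℕ∞) (fderiv ℝ f) := hf.fderiv_right (by norm_num)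
  have h2 : Differentiable ℝ (fderiv ℝ f) := h1.differentiable (by norm_num)
  have key : ∀ a b z, DD a (DD b f) z = fderiv ℝ (fderiv ℝ f) z a b := by
    intro a b z
    unfold DD
    rw [fderiv_clm_apply (h2 z) (differentiableAt_const b)]
    simp
  funext z
  rw [key, key]
  have hs : IsSymmSndFDerivAt ℝ f z := by
    apply ContDiffAt.isSymmSndFDerivAt (hf.contDiffAt)
    simp only [minSmoothness_of_isRCLikeNormedField]
    exact WithTop.coe_le_coe.2 (le_top : (2 : ℕ∞) ≤ ⊤)
  exact hs v w

theorem DD_add {d : ℕ} (v : (Fin d → ℝ) × (Fin d → ℝ))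
    {f g : (Fin d → ℝ) × (Fin d → ℝ) → ℝ} (hf : Differentiable ℝ f) (hg : Differentiable ℝ g)
    (z) : DD v (fun w => f w + g w) z = DD v f z + DD v g z := by
  unfold DD
  rw [fderiv_fun_add (hf z) (hg z)]; rfl

theorem DD_mul {d : ℕ} (v : (Fin d → ℝ) × (Fin d → ℝ))
    {f g : (Fin d → ℝ) × (Fin d → ℝ) → ℝ} (hf : Differentiable ℝ f) (hg : Differentiable ℝ g)
    (z) : DD v (fun w => f w * g w) z = f z * DD v g z + DD v f z * g z := by
  unfold DD
  rw [fderiv_fun_mul (hf z) (hg z)]; simp [mul_comm]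

theorem DD_sum {d : ℕ} (v : (Fin d → ℝ) × (Fin d → ℝ)) {ι : Type*} (s : Finset ι)
    {f : ι → (Fin d → ℝ) × (Fin d → ℝ) → ℝ} (hf : ∀ i, Differentiable ℝ (f i))
    (z) : DD v (fun w => ∑ i ∈ s, f i w) z = ∑ i ∈ s, DD v (f i) z := by
  unfold DD
  rw [fderiv_fun_sum (fun i _ => hf i z)]; simp

theorem langevin_eq {d : ℕ} (U : (Fin d → ℝ) → ℝ) (σ : ℝ)
    (f : (Fin d → ℝ) × (Fin d → ℝ) → ℝ) (z : (Fin d → ℝ) × (Fin d → ℝ)) :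
    langevin U σ f z = (∑ i, -(z.2 i) * DD (Pi.single i (1 : ℝ), 0) f z)
    + (∑ i, (gradU U i z.1 - z.2 i / σ) * DD (0, Pi.single i (1 : ℝ)) f z)
    + ∑ i, DD (0, Pi.single i (1 : ℝ)) (DD (0, Pi.single i (1 : ℝ)) f) z := rfl

theorem langevin_add {d : ℕ} (U : (Fin d → ℝ) → ℝ) (σ : ℝ)
    {f g : (Fin d → ℝ) × (Fin d → ℝ) → ℝ} (hf : ContDiff ℝ (⊤ : ℕ∞) f)
    (hg : ContDiff ℝ (⊤ : ℕ∞) g) (z) :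
    langevin U σ (fun w => f w + g w) z = langevin U σ f z + langevin U σ g z := by
  have h1 : ∀ v, DD v (fun w => f w + g w) = fun w => DD v f w + DD v g w :=
    fun v => funext fun w => DD_add v (smooth_diff hf) (smooth_diff hg) w
  have h2 : ∀ v z, DD v (DD v (fun w => f w + g w)) z = DD v (DD v f) z + DD v (DD v g) z := by
    intro v z
    rw [h1, DD_add v (smooth_diff (DD_smooth v hf)) (smooth_diff (DD_smooth v hg))]
  simp only [langevin_eq, h2]
  simp only [h1, mul_add, Finset.sum_add_distrib]
  ring

theorem langevin_sum {d : ℕ} (U : (Fin d → ℝ) → ℝ) (σ : ℝ) {ι : Type*} (s : Finset ι)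
    {f : ι → (Fin d → ℝ) × (Fin d → ℝ) → ℝ} (hf : ∀ i, ContDiff ℝ (⊤ : ℕ∞) (f i)) (z) :
    langevin U σ (fun w => ∑ i ∈ s, f i w) z = ∑ i ∈ s, langevin U σ (f i) z := by
  classical
  induction s using Finset.induction_on with
  | empty =>
    have h0 : ∀ v : (Fin d → ℝ) × (Fin d → ℝ), DD v (fun _ => (0 : ℝ)) = fun _ => 0 := by
      intro v; funext w; simp [DD]
    simp [langevin_eq, h0]
  | insert a s ha ih =>
    simp only [Finset.sum_insert ha]
    rw [langevin_add U σ (hf a) (ContDiff.sum fun i _ => hf i), ih]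

theorem langevin_sq {d : ℕ} (U : (Fin d → ℝ) → ℝ) (σ : ℝ)
    {f : (Fin d → ℝ) × (Fin d → ℝ) → ℝ} (hf : ContDiff ℝ (⊤ : ℕ∞) f) (z) :
    langevin U σ (fun w => f w ^ 2) z = 2 * (f z * langevin U σ f z)
      + 2 * ∑ i, (DD (0, Pi.single i (1 : ℝ)) f z) ^ 2 := by
  have hd := smooth_diff hf
  have h1 : ∀ v, DD v (fun w => f w ^ 2) = fun w => f w * DD v f w + f w * DD v f w := by
    intro v
    funext w
    simp only [pow_two]
    rw [DD_mul v hd hd]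
    ring
  have h2 : ∀ v z, DD v (DD v (fun w => f w ^ 2)) z
      = 2 * (f z * DD v (DD v f) z) + 2 * (DD v f z) ^ 2 := by
    intro v z
    have hv := smooth_diff (DD_smooth v hf)
    rw [h1, DD_add v (hd.fun_mul hv) (hd.fun_mul hv), DD_mul v hd hv]
    ring
  simp only [langevin_eq, h2]
  simp only [h1, mul_add, Finset.sum_add_distrib, Finset.mul_sum]
  simp only [← Finset.sum_add_distrib]
  refine Finset.sum_congr rfl fun i _ => ?_
  ring

theorem gradU_smooth {d : ℕ} {U : (Fin d → ℝ) → ℝ} (hU : ContDiff ℝ (⊤ : ℕ∞) U) (i : Fin d) :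
    ContDiff ℝ (⊤ : ℕ∞) (gradU U i) := by
  have h1 : ContDiff ℝ (⊤ : ℕ∞) (fderiv ℝ U) := hU.fderiv_right (by norm_num)
  exact h1.clm_apply contDiff_const

theorem DD_langevin {d : ℕ} {U : (Fin d → ℝ) → ℝ} (hU : ContDiff ℝ (⊤ : ℕ∞) U) (σ : ℝ)
    {f : (Fin d → ℝ) × (Fin d → ℝ) → ℝ} (hf : ContDiff ℝ (⊤ : ℕ∞) f) (v z) :
    DD v (langevin U σ f) z = langevin U σ (DD v f) z
      + (∑ i, -(v.2 i) * DD (Pi.single i (1 : ℝ), 0) f z)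
      + ∑ i, (fderiv ℝ (gradU U i) z.1 v.1 - v.2 i / σ) * DD (0, Pi.single i (1 : ℝ)) f z := by
  have hL : langevin U σ f = fun z => (∑ i, -(z.2 i) * DD (Pi.single i (1 : ℝ), 0) f z)
    + (∑ i, (gradU U i z.1 - z.2 i / σ) * DD (0, Pi.single i (1 : ℝ)) f z)
    + ∑ i, DD (0, Pi.single i (1 : ℝ)) (DD (0, Pi.single i (1 : ℝ)) f) z := rfl
  have hs := fun w => smooth_diff (DD_smooth w hf)
  have hss := fun w => smooth_diff (DD_smooth w (DD_smooth w hf))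
  have ha : ∀ i : Fin d, Differentiable ℝ
      (fun z : (Fin d → ℝ) × (Fin d → ℝ) => -(z.2 i)) := by intro i; fun_prop
  have hg := fun i => smooth_diff (gradU_smooth hU i)
  have hg1 : ∀ i : Fin d, Differentiable ℝ
      (fun z : (Fin d → ℝ) × (Fin d → ℝ) => gradU U i z.1) :=
    fun i => (hg i).comp differentiable_fst
  have hb : ∀ i : Fin d, Differentiable ℝ
      (fun z : (Fin d → ℝ) × (Fin d → ℝ) => gradU U i z.1 - z.2 i / σ) := by
    intro i
    exact (hg1 i).sub (by fun_prop)
  have hy : ∀ (i : Fin d) (z : (Fin d → ℝ) × (Fin d → ℝ)), HasFDerivAt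
      (fun z : (Fin d → ℝ) × (Fin d → ℝ) => z.2 i)
      ((ContinuousLinearMap.proj (R := ℝ) (φ := fun _ : Fin d => ℝ) i).comp
        (ContinuousLinearMap.snd ℝ (Fin d → ℝ) (Fin d → ℝ))) z := fun i z =>
    ((ContinuousLinearMap.proj (R := ℝ) (φ := fun _ : Fin d => ℝ) i).comp
        (ContinuousLinearMap.snd ℝ (Fin d → ℝ) (Fin d → ℝ))).hasFDerivAt
  have da : ∀ i, DD v (fun z => -(z.2 i)) z = -(v.2 i) := by
    intro i
    unfold DD
    rw [(hy i z).fun_neg.fderiv]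
    simp
  have db : ∀ i, DD v (fun z => gradU U i z.1 - z.2 i / σ) z
      = fderiv ℝ (gradU U i) z.1 v.1 - v.2 i / σ := by
    intro i
    unfold DD
    have e1 : HasFDerivAt (fun z : (Fin d → ℝ) × (Fin d → ℝ) => gradU U i z.1)
      ((fderiv ℝ (gradU U i) z.1).comp (ContinuousLinearMap.fst ℝ _ _)) z :=
      (hg i z.1).hasFDerivAt.comp z hasFDerivAt_fst
    simp only [div_eq_mul_inv]
    rw [(e1.fun_sub ((hy i z).mul_const σ⁻¹)).fderiv]
    simp [mul_comm]
  rw [hL, DD_add v, DD_add v, DD_sum v, DD_sum v, DD_sum v, langevin_eq]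
  · have c2 : ∀ w, DD v (DD w (DD w f)) = DD w (DD w (DD v f)) := by
      intro w
      rw [DD_comm v w (DD_smooth w hf), DD_comm v w hf]
    have e1 : ∀ i, DD v (fun z => -(z.2 i) * DD (Pi.single i (1 : ℝ), 0) f z) z
        = -(z.2 i) * DD (Pi.single i (1 : ℝ), 0) (DD v f) z
          + -(v.2 i) * DD (Pi.single i (1 : ℝ), 0) f z := by
      intro i
      rw [DD_mul v (ha i) (hs _), da, DD_comm v _ hf]
    have e2 : ∀ i, DD v (fun z => (gradU U i z.1 - z.2 i / σ) * DD (0, Pi.single i (1 : ℝ)) f z) z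
        = (gradU U i z.1 - z.2 i / σ) * DD (0, Pi.single i (1 : ℝ)) (DD v f) z
          + (fderiv ℝ (gradU U i) z.1 v.1 - v.2 i / σ) * DD (0, Pi.single i (1 : ℝ)) f z := by
      intro i
      rw [DD_mul v (hb i) (hs _), db, DD_comm v _ hf]
    simp only [e1, e2, c2, Finset.sum_add_distrib]
    ring
  · exact fun i => hss _
  · exact fun i => (hb i).mul (hs _)
  · exact fun i => (ha i).mul (hs _)
  · exact Differentiable.fun_sum fun i _ => (ha i).mul (hs _)
  · exact Differentiable.fun_sum fun i _ => (hb i).mul (hs _)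
  · exact (Differentiable.fun_sum fun i _ => (ha i).mul (hs _)).add
      (Differentiable.fun_sum fun i _ => (hb i).mul (hs _))
  · exact Differentiable.fun_sum fun i _ => hss _

/-- The bilinear form of a matrix is bounded by its Frobenius norm. -/
theorem bilin_bound {d : ℕ} (H : Fin d → Fin d → ℝ) (a b : Fin d → ℝ) (K : ℝ)
    (hK : Real.sqrt (∑ i, ∑ j, (H i j) ^ 2) ≤ K) :
    ∑ i, ∑ j, a i * (H i j * b j) ≤ K * ((∑ i, a i ^ 2) + ∑ i, b i ^ 2) / 2 := by
  have cs := Finset.sum_mul_sq_le_sq_mul_sq (Finset.univ : Finset (Fin d × Fin d))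
    (fun p => H p.1 p.2) (fun p => a p.1 * b p.2)
  simp only [Fintype.sum_prod_type] at cs
  have e1 : ∑ i, ∑ j, H i j * (a i * b j) = ∑ i, ∑ j, a i * (H i j * b j) :=
    Finset.sum_congr rfl fun i _ => Finset.sum_congr rfl fun j _ => by ring
  have e2 : ∑ i, ∑ j, (a i * b j) ^ 2 = (∑ i, a i ^ 2) * ∑ j, b j ^ 2 := by
    rw [Finset.sum_mul_sum]
    exact Finset.sum_congr rfl fun i _ => Finset.sum_congr rfl fun j _ => by ring
  rw [e1, e2] at cs
  have hA : 0 ≤ ∑ i, a i ^ 2 := Finset.sum_nonneg fun i _ => sq_nonneg _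
  have hB : 0 ≤ ∑ i, b i ^ 2 := Finset.sum_nonneg fun i _ => sq_nonneg _
  have hS : 0 ≤ ∑ i, ∑ j, (H i j) ^ 2 :=
    Finset.sum_nonneg fun i _ => Finset.sum_nonneg fun j _ => sq_nonneg _
  have hK0 : 0 ≤ K := (Real.sqrt_nonneg _).trans hK
  have hK2 : ∑ i, ∑ j, (H i j) ^ 2 ≤ K ^ 2 := (Real.sqrt_le_left hK0).1 hK
  generalize (∑ i, a i ^ 2) = A at *
  generalize (∑ i, b i ^ 2) = B at *
  refine (abs_le_of_sq_le_sq' ?_ (by positivity)).2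
  calc _ ≤ _ := cs
    _ ≤ K ^ 2 * (A * B) := by gcongr
    _ ≤ _ := by nlinarith [mul_nonneg (sq_nonneg K) (sq_nonneg (A - B))]

/-- For the kinetic Langevin operator and the quadratic functional Φ(h) = |∇h|²
(full gradient in the 2d variables), pointwise
(1/2)L(|∇h|²) − ∇h·∇(Lh) ≥ −(‖∇²U‖_∞ + 1 + 1/σ)|∇h|². -/
theorem stmt3 {d : ℕ} (U : (Fin d → ℝ) → ℝ) (hU : ContDiff ℝ (⊤ : ℕ∞) U)
    (hK : BddAbove (Set.range fun x : Fin d → ℝ =>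
      Real.sqrt (∑ i, ∑ j, (hessU U i j x) ^ 2)))
    (σ : ℝ) (hσ : 0 < σ)
    (h : (Fin d → ℝ) × (Fin d → ℝ) → ℝ) (hh : ContDiff ℝ (⊤ : ℕ∞) h)
    (z : (Fin d → ℝ) × (Fin d → ℝ)) :
    (1 / 2) * langevin U σ
        (fun w => (∑ i, (pdx i h w) ^ 2) + ∑ i, (pdy i h w) ^ 2) z
        - ((∑ i, pdx i h z * pdx i (langevin U σ h) z)
            + ∑ i, pdy i h z * pdy i (langevin U σ h) z)
      ≥ -(hessNormInf U + 1 + 1 / σ)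
          * ((∑ i, (pdx i h z) ^ 2) + ∑ i, (pdy i h z) ^ 2) := by
  have sx := fun i : Fin d => DD_smooth (Pi.single i (1 : ℝ), 0) hh
  have sy := fun i : Fin d => DD_smooth (0, Pi.single i (1 : ℝ)) hh
  change (1 / 2) * langevin U σ
        (fun w => (∑ i, (DD (Pi.single i (1 : ℝ), 0) h w) ^ 2)
          + ∑ i, (DD (0, Pi.single i (1 : ℝ)) h w) ^ 2) z
        - ((∑ i, DD (Pi.single i (1 : ℝ), 0) h z * DD (Pi.single i (1 : ℝ), 0) (langevin U σ h) z)
            + ∑ i, DD (0, Pi.single i (1 : ℝ)) h z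
              * DD (0, Pi.single i (1 : ℝ)) (langevin U σ h) z)
      ≥ -(hessNormInf U + 1 + 1 / σ)
          * ((∑ i, (DD (Pi.single i (1 : ℝ), 0) h z) ^ 2)
            + ∑ i, (DD (0, Pi.single i (1 : ℝ)) h z) ^ 2)
  rw [langevin_add U σ (ContDiff.sum fun i _ => (sx i).pow 2) (ContDiff.sum fun i _ => (sy i).pow 2),
    langevin_sum U σ _ (fun i => (sx i).pow 2), langevin_sum U σ _ (fun i => (sy i).pow 2)]
  have hx : ∀ k : Fin d, DD (Pi.single k (1 : ℝ), 0) (langevin U σ h) z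
      = langevin U σ (DD (Pi.single k (1 : ℝ), 0) h) z
        + ∑ j, hessU U k j z.1 * DD (0, Pi.single j (1 : ℝ)) h z := by
    intro k
    rw [DD_langevin hU σ hh]
    simp
    rfl
  have hy : ∀ k : Fin d, DD (0, Pi.single k (1 : ℝ)) (langevin U σ h) z
      = langevin U σ (DD (0, Pi.single k (1 : ℝ)) h) z
        - DD (Pi.single k (1 : ℝ), 0) h z - (1 / σ) * DD (0, Pi.single k (1 : ℝ)) h z := by
    intro k
    rw [DD_langevin hU σ hh]
    simp [Pi.single_apply, ite_div]
    ring
  simp only [hx, hy, langevin_sq U σ (sx _), langevin_sq U σ (sy _)]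
  have hb := bilin_bound (fun i j => hessU U i j z.1)
    (fun i => DD (Pi.single i (1 : ℝ), 0) h z) (fun j => DD (0, Pi.single j (1 : ℝ)) h z)
    (hessNormInf U) (le_ciSup hK z.1)
  have hK0 : 0 ≤ hessNormInf U := Real.iSup_nonneg fun x => Real.sqrt_nonneg _
  simp only [mul_add, mul_sub, Finset.sum_add_distrib, Finset.sum_sub_distrib, ← Finset.mul_sum] at hb ⊢
  have p1 : 0 ≤ ∑ k : Fin d, ∑ i : Fin d,
      (DD (0, Pi.single i (1 : ℝ)) (DD (Pi.single k (1 : ℝ), 0) h) z) ^ 2 :=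
    Finset.sum_nonneg fun i _ => Finset.sum_nonneg fun j _ => sq_nonneg _
  have p2 : 0 ≤ ∑ k : Fin d, ∑ i : Fin d,
      (DD (0, Pi.single i (1 : ℝ)) (DD (0, Pi.single k (1 : ℝ)) h) z) ^ 2 :=
    Finset.sum_nonneg fun i _ => Finset.sum_nonneg fun j _ => sq_nonneg _
  have p3 : 0 ≤ ∑ k : Fin d, (DD (0, Pi.single k (1 : ℝ)) h z + DD (Pi.single k (1 : ℝ), 0) h z) ^ 2 :=
    Finset.sum_nonneg fun i _ => sq_nonneg _
  have p4 : ∑ k : Fin d, (DD (0, Pi.single k (1 : ℝ)) h z + DD (Pi.single k (1 : ℝ), 0) h z) ^ 2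
      = (∑ k : Fin d, DD (0, Pi.single k (1 : ℝ)) h z ^ 2)
        + 2 * (∑ k : Fin d, DD (0, Pi.single k (1 : ℝ)) h z * DD (Pi.single k (1 : ℝ), 0) h z)
        + ∑ k : Fin d, DD (Pi.single k (1 : ℝ), 0) h z ^ 2 := by
    rw [Finset.mul_sum, ← Finset.sum_add_distrib, ← Finset.sum_add_distrib]
    exact Finset.sum_congr rfl fun i _ => by ring
  have p5 : ∑ k : Fin d, DD (0, Pi.single k (1 : ℝ)) h z * (1 / σ * DD (0, Pi.single k (1 : ℝ)) h z)
      = (1 / σ) * ∑ k : Fin d, DD (0, Pi.single k (1 : ℝ)) h z ^ 2 := by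
    rw [Finset.mul_sum]
    exact Finset.sum_congr rfl fun i _ => by ring
  rw [p4] at p3
  rw [p5]
  have hA : 0 ≤ ∑ k : Fin d, DD (Pi.single k (1 : ℝ), 0) h z ^ 2 :=
    Finset.sum_nonneg fun i _ => sq_nonneg _
  have hB : 0 ≤ ∑ k : Fin d, DD (0, Pi.single k (1 : ℝ)) h z ^ 2 :=
    Finset.sum_nonneg fun i _ => sq_nonneg _
  have hs : 0 < 1 / σ := by positivity
  have q1 := mul_nonneg hK0 hA
  have q2 := mul_nonneg hK0 hB
  have q3 := mul_nonneg hs.le hA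
  have q4 := mul_nonneg hs.le hB
  nlinarith
end
end

section
/- Fix d ∈ ℕ, a smooth function U : ℝ^d → ℝ with ‖∇²U‖_∞ < ∞, and a constant σ > 0, and let L be the kinetic Langevin operator L h = −y·∇_x h + (∇U(x) − y/σ)·∇_y h + Δ_y h. Set κ = ‖∇²U‖_∞ + 1 + 1/σ, β = 1 + 2κ², and A = ∇_x + ∇_y. Then for every smooth h : ℝ^d × ℝ^d → (0,∞), pointwise on ℝ^d × ℝ^d, (1/2)[ L(|Ah|²/h + β h ln h) − ( 2(Ah)·A(Lh)/h − |Ah|² Lh/h² + β(1 + ln h) Lh ) ] ≥ (1/2) |∇h|²/h, where ∇ = (∇_x, ∇_y) is the full gradient. -/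
noncomputable section

open scoped BigOperators

open scoped BigOperators

/-- directional derivative -/
def dd {d : ℕ} (v : (Fin d → ℝ) × (Fin d → ℝ)) (f : (Fin d → ℝ) × (Fin d → ℝ) → ℝ)
    (z : (Fin d → ℝ) × (Fin d → ℝ)) : ℝ := fderiv ℝ f z v

theorem pdx_eq_dd {d : ℕ} (i : Fin d) : pdx i = dd (d := d) (Pi.single i (1 : ℝ), 0) := rfl

theorem pdy_eq_dd {d : ℕ} (i : Fin d) : pdy i = dd (d := d) (0, Pi.single i (1 : ℝ)) := rfl

theorem dd_smooth {d : ℕ} (v : (Fin d → ℝ) × (Fin d → ℝ))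
    {f : (Fin d → ℝ) × (Fin d → ℝ) → ℝ} (hf : ContDiff ℝ (⊤ : ℕ∞) f) :
    ContDiff ℝ (⊤ : ℕ∞) (dd v f) := by
  have h1 : ContDiff ℝ (⊤ : ℕ∞) (fderiv ℝ f) := hf.fderiv_right (by simp)
  exact h1.clm_apply contDiff_const

theorem dd_comm {d : ℕ} (v w : (Fin d → ℝ) × (Fin d → ℝ))
    {f : (Fin d → ℝ) × (Fin d → ℝ) → ℝ} (hf : ContDiff ℝ (⊤ : ℕ∞) f) :
    dd v (dd w f) = dd w (dd v f) := by
  funext z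
  have h1 : ContDiff ℝ (⊤ : ℕ∞) (fderiv ℝ f) := hf.fderiv_right (by simp)
  have h2 : DifferentiableAt ℝ (fderiv ℝ f) z := (h1.differentiable (by simp)) z
  have key : ∀ a b : (Fin d → ℝ) × (Fin d → ℝ),
      dd a (dd b f) z = fderiv ℝ (fderiv ℝ f) z a b := by
    intro a b
    have : dd b f = fun u => fderiv ℝ f u b := rfl
    rw [this]
    unfold dd
    rw [fderiv_clm_apply h2 (differentiableAt_const _)]
    simp
  rw [key, key]
  have hs : IsSymmSndFDerivAt ℝ f z :=
    hf.contDiffAt.isSymmSndFDerivAt (by simpa using (WithTop.coe_le_coe.2 (le_top : (2:ℕ∞) ≤ ⊤)))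
  exact hs v w

theorem sm_diff {d : ℕ} {f : (Fin d → ℝ) × (Fin d → ℝ) → ℝ} (hf : ContDiff ℝ (⊤ : ℕ∞) f)
    (z : (Fin d → ℝ) × (Fin d → ℝ)) : DifferentiableAt ℝ f z :=
  hf.differentiable (by simp) z

theorem dd_add {d : ℕ} (v : (Fin d → ℝ) × (Fin d → ℝ))
    {f g : (Fin d → ℝ) × (Fin d → ℝ) → ℝ} (hf : ContDiff ℝ (⊤ : ℕ∞) f)
    (hg : ContDiff ℝ (⊤ : ℕ∞) g) :
    dd v (fun w => f w + g w) = fun w => dd v f w + dd v g w := by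
  funext z
  unfold dd
  rw [fderiv_fun_add (sm_diff hf z) (sm_diff hg z)]; rfl

theorem dd_mul {d : ℕ} (v : (Fin d → ℝ) × (Fin d → ℝ))
    {f g : (Fin d → ℝ) × (Fin d → ℝ) → ℝ} (hf : ContDiff ℝ (⊤ : ℕ∞) f)
    (hg : ContDiff ℝ (⊤ : ℕ∞) g) :
    dd v (fun w => f w * g w) = fun w => f w * dd v g w + dd v f w * g w := by
  funext z
  unfold dd
  rw [fderiv_fun_mul (sm_diff hf z) (sm_diff hg z)]
  simp; ring

theorem dd_const {d : ℕ} (v : (Fin d → ℝ) × (Fin d → ℝ)) (c : ℝ) :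
    dd v (fun _ => c) = fun _ => 0 := by
  funext z
  unfold dd; simp

theorem dd_sum {d : ℕ} (v : (Fin d → ℝ) × (Fin d → ℝ)) {ι : Type} (s : Finset ι)
    {f : ι → (Fin d → ℝ) × (Fin d → ℝ) → ℝ} (hf : ∀ i, ContDiff ℝ (⊤ : ℕ∞) (f i)) :
    dd v (fun w => ∑ i ∈ s, f i w) = fun w => ∑ i ∈ s, dd v (f i) w := by
  funext z
  unfold dd
  rw [fderiv_fun_sum (fun i _ => sm_diff (hf i) z)]
  simp

theorem dd_inv {d : ℕ} (v : (Fin d → ℝ) × (Fin d → ℝ))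
    {h : (Fin d → ℝ) × (Fin d → ℝ) → ℝ} (hh : ContDiff ℝ (⊤ : ℕ∞) h) (hpos : ∀ z, 0 < h z) :
    dd v (fun w => (h w)⁻¹) = fun w => -((h w)⁻¹ * (h w)⁻¹ * dd v h w) := by
  funext z
  have e : HasFDerivAt (fun w => (h w)⁻¹) _ z :=
    (hasDerivAt_inv (hpos z).ne').comp_hasFDerivAt z (sm_diff hh z).hasFDerivAt
  unfold dd
  rw [e.fderiv]
  simp
  left
  ring

theorem dd_log {d : ℕ} (v : (Fin d → ℝ) × (Fin d → ℝ))
    {h : (Fin d → ℝ) × (Fin d → ℝ) → ℝ} (hh : ContDiff ℝ (⊤ : ℕ∞) h) (hpos : ∀ z, 0 < h z) :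
    dd v (fun w => Real.log (h w)) = fun w => (h w)⁻¹ * dd v h w := by
  funext z
  unfold dd
  rw [fderiv.log (sm_diff hh z) (hpos z).ne']
  simp

theorem inv_smooth {d : ℕ} 
    {h : (Fin d → ℝ) × (Fin d → ℝ) → ℝ} (hh : ContDiff ℝ (⊤ : ℕ∞) h) (hpos : ∀ z, 0 < h z) :
    ContDiff ℝ (⊤ : ℕ∞) (fun w => (h w)⁻¹) := hh.inv (fun z => (hpos z).ne')

theorem log_smooth {d : ℕ} 
    {h : (Fin d → ℝ) × (Fin d → ℝ) → ℝ} (hh : ContDiff ℝ (⊤ : ℕ∞) h) (hpos : ∀ z, 0 < h z) :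
    ContDiff ℝ (⊤ : ℕ∞) (fun w => Real.log (h w)) := hh.log (fun z => (hpos z).ne')

theorem lang_eq {d : ℕ} (U : (Fin d → ℝ) → ℝ) (σ : ℝ)
    (f : (Fin d → ℝ) × (Fin d → ℝ) → ℝ) (z : (Fin d → ℝ) × (Fin d → ℝ)) :
    langevin U σ f z = ∑ i, (-(z.2 i) * pdx i f z
      + (gradU U i z.1 - z.2 i / σ) * pdy i f z + pdy i (pdy i f) z) := by
  unfold langevin
  rw [Finset.sum_add_distrib, Finset.sum_add_distrib]

theorem lang_add {d : ℕ} (U : (Fin d → ℝ) → ℝ) (σ : ℝ)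
    {f g : (Fin d → ℝ) × (Fin d → ℝ) → ℝ} (hf : ContDiff ℝ (⊤ : ℕ∞) f)
    (hg : ContDiff ℝ (⊤ : ℕ∞) g) (z : (Fin d → ℝ) × (Fin d → ℝ)) :
    langevin U σ (fun w => f w + g w) z = langevin U σ f z + langevin U σ g z := by
  simp only [lang_eq, ← Finset.sum_add_distrib, pdx_eq_dd, pdy_eq_dd]
  refine Finset.sum_congr rfl fun i _ => ?_
  simp only [dd_add _ hf hg, dd_add _ (dd_smooth _ hf) (dd_smooth _ hg)]
  ring

/-- Product rule for the second-order operator. -/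
theorem lang_mul {d : ℕ} (U : (Fin d → ℝ) → ℝ) (σ : ℝ)
    {f g : (Fin d → ℝ) × (Fin d → ℝ) → ℝ} (hf : ContDiff ℝ (⊤ : ℕ∞) f)
    (hg : ContDiff ℝ (⊤ : ℕ∞) g) (z : (Fin d → ℝ) × (Fin d → ℝ)) :
    langevin U σ (fun w => f w * g w) z = f z * langevin U σ g z + g z * langevin U σ f z
      + 2 * ∑ i, pdy i f z * pdy i g z := by
  simp only [lang_eq, Finset.mul_sum, ← Finset.sum_add_distrib, pdx_eq_dd, pdy_eq_dd]
  refine Finset.sum_congr rfl fun i _ => ?_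
  have s1 := dd_smooth (0, Pi.single i (1:ℝ)) hf
  have s2 := dd_smooth (0, Pi.single i (1:ℝ)) hg
  simp only [dd_mul _ hf hg, dd_add _ (hf.mul s2) (s1.mul hg), dd_mul _ hf s2, dd_mul _ s1 hg]
  ring

theorem lang_const {d : ℕ} (U : (Fin d → ℝ) → ℝ) (σ : ℝ) (c : ℝ)
    (z : (Fin d → ℝ) × (Fin d → ℝ)) :
    langevin U σ (fun _ => c) z = 0 := by
  simp [lang_eq, pdx_eq_dd, pdy_eq_dd, dd_const]

theorem lang_sum {d : ℕ} (U : (Fin d → ℝ) → ℝ) (σ : ℝ) {ι : Type} (s : Finset ι)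
    {f : ι → (Fin d → ℝ) × (Fin d → ℝ) → ℝ} (hf : ∀ i, ContDiff ℝ (⊤ : ℕ∞) (f i))
    (z : (Fin d → ℝ) × (Fin d → ℝ)) :
    langevin U σ (fun w => ∑ i ∈ s, f i w) z = ∑ i ∈ s, langevin U σ (f i) z := by
  simp only [lang_eq, pdx_eq_dd, pdy_eq_dd]
  rw [Finset.sum_comm]
  refine Finset.sum_congr rfl fun i _ => ?_
  simp only [dd_sum _ s hf, dd_sum _ s (fun j => dd_smooth _ (hf j)), Finset.mul_sum,
    ← Finset.sum_add_distrib]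

theorem lang_inv {d : ℕ} (U : (Fin d → ℝ) → ℝ) (σ : ℝ)
    {h : (Fin d → ℝ) × (Fin d → ℝ) → ℝ} (hh : ContDiff ℝ (⊤ : ℕ∞) h) (hpos : ∀ z, 0 < h z)
    (z : (Fin d → ℝ) × (Fin d → ℝ)) :
    langevin U σ (fun w => (h w)⁻¹) z = -((h z)⁻¹ ^ 2 * langevin U σ h z)
      + 2 * (h z)⁻¹ ^ 3 * ∑ i, pdy i h z ^ 2 := by
  have hi := inv_smooth hh hpos
  have e := lang_mul U σ hh hi z
  have : (fun w => h w * (h w)⁻¹) = fun _ => (1:ℝ) := by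
    funext w; exact mul_inv_cancel₀ (hpos w).ne'
  rw [this, lang_const] at e
  simp only [pdy_eq_dd, dd_inv _ hh hpos] at e
  have e2 : ∑ i, dd (0, Pi.single i (1:ℝ)) h z *
      -((h z)⁻¹ * (h z)⁻¹ * dd (0, Pi.single i (1:ℝ)) h z)
      = -((h z)⁻¹ ^ 2 * ∑ i, pdy i h z ^ 2) := by
    rw [Finset.mul_sum, ← Finset.sum_neg_distrib]
    refine Finset.sum_congr rfl fun i _ => ?_
    rw [pdy_eq_dd]; ring
  rw [e2] at e
  have hz := (hpos z).ne'
  have e3 : langevin U σ (fun w => (h w)⁻¹) z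
     = (h z)⁻¹ * (h z * langevin U σ (fun w => (h w)⁻¹) z) := by field_simp
  rw [e3]
  linear_combination -(h z)⁻¹ * e

theorem lang_log {d : ℕ} (U : (Fin d → ℝ) → ℝ) (σ : ℝ)
    {h : (Fin d → ℝ) × (Fin d → ℝ) → ℝ} (hh : ContDiff ℝ (⊤ : ℕ∞) h) (hpos : ∀ z, 0 < h z)
    (z : (Fin d → ℝ) × (Fin d → ℝ)) :
    langevin U σ (fun w => Real.log (h w)) z = (h z)⁻¹ * langevin U σ h z
      - (h z)⁻¹ ^ 2 * ∑ i, pdy i h z ^ 2 := by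
  have hi := inv_smooth hh hpos
  simp only [lang_eq, Finset.mul_sum, ← Finset.sum_sub_distrib, pdx_eq_dd, pdy_eq_dd]
  refine Finset.sum_congr rfl fun i _ => ?_
  simp only [dd_log _ hh hpos, dd_mul _ hi (dd_smooth _ hh), dd_inv _ hh hpos]
  ring

theorem lang_sq_div {d : ℕ} (U : (Fin d → ℝ) → ℝ) (σ : ℝ)
    {a h : (Fin d → ℝ) × (Fin d → ℝ) → ℝ} (ha : ContDiff ℝ (⊤ : ℕ∞) a)
    (hh : ContDiff ℝ (⊤ : ℕ∞) h) (hpos : ∀ z, 0 < h z)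
    (z : (Fin d → ℝ) × (Fin d → ℝ)) :
    2 * a z * langevin U σ a z * (h z)⁻¹ - a z ^ 2 * langevin U σ h z * (h z)⁻¹ ^ 2
     ≤ langevin U σ (fun w => (a w * a w) * (h w)⁻¹) z := by
  have hi := inv_smooth hh hpos
  rw [lang_mul U σ (ha.mul ha) hi, lang_mul U σ ha ha, lang_inv U σ hh hpos]
  have : 0 ≤ 2 * (h z)⁻¹ * ∑ j, (pdy j a z - a z * pdy j h z * (h z)⁻¹) ^ 2 := by
    have := (hpos z).le
    positivity
  rw [← sub_nonneg]
  convert this using 1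
  simp only [pdy_eq_dd, dd_inv _ hh hpos, dd_mul _ ha ha]
  have e : ∀ j : Fin d, (dd (0, Pi.single j (1:ℝ)) a z
      - a z * dd (0, Pi.single j (1:ℝ)) h z * (h z)⁻¹) ^ 2
      = dd (0, Pi.single j (1:ℝ)) a z * dd (0, Pi.single j (1:ℝ)) a z
        - 2 * a z * (h z)⁻¹ * (dd (0, Pi.single j (1:ℝ)) a z * dd (0, Pi.single j (1:ℝ)) h z)
        + a z ^ 2 * (h z)⁻¹ ^ 2 * dd (0, Pi.single j (1:ℝ)) h z ^ 2 := by intro j; ring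
  have e2 : ∀ j : Fin d, (a z * dd (0, Pi.single j (1:ℝ)) a z + dd (0, Pi.single j (1:ℝ)) a z * a z)
      * -((h z)⁻¹ * (h z)⁻¹ * dd (0, Pi.single j (1:ℝ)) h z)
      = (-2 * a z * (h z)⁻¹ ^ 2) *
        (dd (0, Pi.single j (1:ℝ)) a z * dd (0, Pi.single j (1:ℝ)) h z) := by intro j; ring
  simp only [e, e2, Finset.sum_add_distrib, Finset.sum_sub_distrib, ← Finset.mul_sum]
  ring

theorem dd_lang {d : ℕ} (U : (Fin d → ℝ) → ℝ) (hU : ContDiff ℝ (⊤ : ℕ∞) U) (σ : ℝ)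
    {h : (Fin d → ℝ) × (Fin d → ℝ) → ℝ} (hh : ContDiff ℝ (⊤ : ℕ∞) h)
    (z : (Fin d → ℝ) × (Fin d → ℝ)) (i : Fin d) :
    dd (Pi.single i 1, Pi.single i 1) (langevin U σ h) z
      = langevin U σ (dd (Pi.single i 1, Pi.single i 1) h) z
        - pdx i h z + (∑ k, hessU U i k z.1 * pdy k h z) - pdy i h z / σ := by
  set v : (Fin d → ℝ) × (Fin d → ℝ) := (Pi.single i 1, Pi.single i 1) with hv
  have hfun : langevin U σ h = fun z => ∑ k, (-(z.2 k) * pdx k h z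
      + (gradU U k z.1 - z.2 k / σ) * pdy k h z + pdy k (pdy k h) z) :=
    funext (lang_eq U σ h)
  have c1 : ∀ k : Fin d, ContDiff ℝ (⊤ : ℕ∞)
      (fun w : (Fin d → ℝ) × (Fin d → ℝ) => -(w.2 k)) := fun k => by fun_prop
  have g0 : ∀ k : Fin d, ContDiff ℝ (⊤ : ℕ∞) (gradU U k) := fun k => by
    have h1 : ContDiff ℝ (⊤ : ℕ∞) (fderiv ℝ U) := hU.fderiv_right (by simp)
    exact h1.clm_apply contDiff_const
  have c2 : ∀ k : Fin d, ContDiff ℝ (⊤ : ℕ∞)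
      (fun w : (Fin d → ℝ) × (Fin d → ℝ) => gradU U k w.1 - w.2 k / σ) := fun k => by
    have := (g0 k).comp (contDiff_fst (E := Fin d → ℝ) (F := Fin d → ℝ))
    have h2 : ContDiff ℝ (⊤ : ℕ∞)
      (fun w : (Fin d → ℝ) × (Fin d → ℝ) => w.2 k / σ) := by fun_prop
    exact this.sub h2
  have p2 : ∀ k : Fin d, HasFDerivAt (fun w : (Fin d → ℝ) × (Fin d → ℝ) => w.2 k)
      ((ContinuousLinearMap.proj k).comp (ContinuousLinearMap.snd ℝ (Fin d → ℝ) (Fin d → ℝ))) z :=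
    fun k => ((ContinuousLinearMap.proj (R := ℝ) (φ := fun _ : Fin d => ℝ) k).comp
      (ContinuousLinearMap.snd ℝ (Fin d → ℝ) (Fin d → ℝ))).hasFDerivAt
  have d1 : ∀ k : Fin d, dd v (fun w => -(w.2 k)) z = -(Pi.single i 1 : Fin d → ℝ) k := by
    intro k
    unfold dd
    rw [(p2 k).fun_neg.fderiv]
    simp [hv]
  have d2 : ∀ k : Fin d, dd v (fun w => gradU U k w.1 - w.2 k / σ) z
      = hessU U i k z.1 - (Pi.single i 1 : Fin d → ℝ) k / σ := by
    intro k
    have hg : HasFDerivAt (gradU U k) (fderiv ℝ (gradU U k) z.1) z.1 :=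
      ((g0 k).differentiable (by simp) z.1).hasFDerivAt
    have hg' := hg.comp z (hasFDerivAt_fst (𝕜 := ℝ) (p := z))
    have hq := (p2 k).mul_const σ⁻¹
    have := hg'.sub hq
    unfold dd
    simp only [div_eq_mul_inv]
    have e := this.fderiv
    have e' : fderiv ℝ (fun w : (Fin d → ℝ) × (Fin d → ℝ) => gradU U k w.1 - w.2 k * σ⁻¹) z = _ := e
    rw [e']
    simp [hv, mul_comm]
    rfl
  rw [hfun, dd_sum]
  · simp only [pdx_eq_dd, pdy_eq_dd]
    have key : ∀ k : Fin d, dd v (fun z => -(z.2 k) * dd (Pi.single k 1, 0) h z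
      + (gradU U k z.1 - z.2 k / σ) * dd (0, Pi.single k 1) h z
      + dd (0, Pi.single k 1) (dd (0, Pi.single k 1) h) z) z
      = (-(z.2 k) * dd (Pi.single k 1, 0) (dd v h) z
      + (gradU U k z.1 - z.2 k / σ) * dd (0, Pi.single k 1) (dd v h) z
      + dd (0, Pi.single k 1) (dd (0, Pi.single k 1) (dd v h)) z)
      - (Pi.single i 1 : Fin d → ℝ) k * dd (Pi.single k 1, 0) h z
      + hessU U i k z.1 * dd (0, Pi.single k 1) h z
      - (Pi.single i 1 : Fin d → ℝ) k * (dd (0, Pi.single k 1) h z / σ) := by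
      intro k
      have s1 := dd_smooth (Pi.single k 1, 0) hh
      have s2 := dd_smooth (0, Pi.single k 1) hh
      have s3 := dd_smooth (0, Pi.single k 1) s2
      rw [dd_add v (((c1 k).mul s1).add ((c2 k).mul s2)) s3,
        dd_add v ((c1 k).mul s1) ((c2 k).mul s2), dd_mul v (c1 k) s1, dd_mul v (c2 k) s2]
      simp only []
      rw [d1, d2, dd_comm v _ s2, dd_comm v _ hh, dd_comm v _ hh]
      ring
    simp only [key, Finset.sum_add_distrib, Finset.sum_sub_distrib, lang_eq, pdx_eq_dd, pdy_eq_dd]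
    simp [Pi.single_apply]
  · intro k
    have s1 := dd_smooth (Pi.single k 1, 0) hh
    have s2 := dd_smooth (0, Pi.single k 1) hh
    have s3 := dd_smooth (0, Pi.single k 1) s2
    exact (((c1 k).mul s1).add ((c2 k).mul s2)).add s3

theorem cs_hess {d : ℕ} (H : Fin d → Fin d → ℝ) (a q : Fin d → ℝ) (K : ℝ)
    (hK : Real.sqrt (∑ i, ∑ j, H i j ^ 2) ≤ K) :
    ∑ i, a i * ∑ k, H i k * q k ≤ K * (Real.sqrt (∑ i, a i ^ 2) * Real.sqrt (∑ i, q i ^ 2)) := by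
  have h1 : ∑ i, a i * ∑ k, H i k * q k
      = ∑ p : Fin d × Fin d, H p.1 p.2 * (a p.1 * q p.2) := by
    rw [Fintype.sum_prod_type]
    refine Finset.sum_congr rfl fun i _ => ?_
    rw [Finset.mul_sum]
    refine Finset.sum_congr rfl fun k _ => ?_
    ring
  have h2 := Real.sum_mul_le_sqrt_mul_sqrt Finset.univ (fun p : Fin d × Fin d => H p.1 p.2)
    (fun p => a p.1 * q p.2)
  have h3 : ∑ p : Fin d × Fin d, (a p.1 * q p.2) ^ 2 = (∑ i, a i ^ 2) * ∑ i, q i ^ 2 := by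
    rw [Fintype.sum_prod_type, Finset.sum_mul_sum]
    simp only [mul_pow]
  rw [h3, Real.sqrt_mul (Finset.sum_nonneg fun i _ => sq_nonneg _)] at h2
  have h4 : ∑ p : Fin d × Fin d, H p.1 p.2 ^ 2 = ∑ i, ∑ j, H i j ^ 2 := by
    rw [Fintype.sum_prod_type]
  rw [h4] at h2
  rw [h1]
  exact h2.trans (mul_le_mul_of_nonneg_right hK (by positivity))

theorem final_alg {d : ℕ} (H : Fin d → Fin d → ℝ) (p q : Fin d → ℝ) (K s : ℝ)
    (hK : Real.sqrt (∑ i, ∑ j, H i j ^ 2) ≤ K) (hs : 0 < s) :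
    (1 / 2) * ((∑ i, p i ^ 2) + ∑ i, q i ^ 2) ≤
    ∑ i, (p i + q i) * (p i - (∑ k, H i k * q k) + q i * s)
      + (1 / 2) * (1 + 2 * (K + 1 + s) ^ 2) * ∑ i, q i ^ 2 := by
  have hK0 : 0 ≤ K := (Real.sqrt_nonneg _).trans hK
  have c1 := cs_hess H (fun i => p i + q i) q K hK
  have c2 := Real.sum_mul_le_sqrt_mul_sqrt Finset.univ (fun i => -(p i + q i)) q
  simp only [neg_sq, neg_mul, Finset.sum_neg_distrib] at c2
  have hA : 0 ≤ ∑ i, (p i + q i) ^ 2 := Finset.sum_nonneg fun i _ => sq_nonneg _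
  have hQ : 0 ≤ ∑ i, q i ^ 2 := Finset.sum_nonneg fun i _ => sq_nonneg _
  have eP : ∑ i, p i ^ 2 = ∑ i, (p i + q i) ^ 2 - 2 * (∑ i, (p i + q i) * q i)
      + ∑ i, q i ^ 2 := by
    rw [Finset.mul_sum, ← Finset.sum_sub_distrib, ← Finset.sum_add_distrib]
    exact Finset.sum_congr rfl fun i _ => by ring
  have eM : ∑ i, (p i + q i) * (p i - (∑ k, H i k * q k) + q i * s)
      = ∑ i, (p i + q i) ^ 2 + (s - 1) * (∑ i, (p i + q i) * q i)
        - ∑ i, (p i + q i) * (∑ k, H i k * q k) := by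
    rw [Finset.mul_sum, ← Finset.sum_add_distrib, ← Finset.sum_sub_distrib]
    exact Finset.sum_congr rfl fun i _ => by ring
  rw [eP, eM]
  rw [← Real.sq_sqrt hA, ← Real.sq_sqrt hQ]
  set A := Real.sqrt (∑ i, (p i + q i) ^ 2)
  set Q := Real.sqrt (∑ i, q i ^ 2)
  have c3 := mul_le_mul_of_nonneg_left c2 hs.le
  have e1 : 0 ≤ (A - (s + K) * Q) ^ 2 := sq_nonneg _
  have e2 : 0 ≤ ((K + 1 + s) ^ 2 - 1 / 2 - (K + s) ^ 2 / 2) * Q ^ 2 := by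
    apply mul_nonneg _ (sq_nonneg _)
    nlinarith [sq_nonneg (K + s)]
  nlinarith

/-- For the kinetic Langevin operator, κ = ‖∇²U‖_∞ + 1 + 1/σ, β = 1 + 2κ², A = ∇ₓ + ∇_y
and the distorted entropy functional Φ(h) = |Ah|²/h + β h ln h, pointwise
Γ_{L,Φ}(h) ≥ (1/2)|∇h|²/h for every smooth positive h. -/
theorem stmt6 {d : ℕ} (U : (Fin d → ℝ) → ℝ) (hU : ContDiff ℝ (⊤ : ℕ∞) U)
    (hK : BddAbove (Set.range fun x : Fin d → ℝ =>
      Real.sqrt (∑ i, ∑ j, (hessU U i j x) ^ 2)))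
    (σ : ℝ) (hσ : 0 < σ)
    (h : (Fin d → ℝ) × (Fin d → ℝ) → ℝ) (hh : ContDiff ℝ (⊤ : ℕ∞) h)
    (hpos : ∀ z, 0 < h z)
    (z : (Fin d → ℝ) × (Fin d → ℝ)) :
    (1 / 2) * (langevin U σ
        (fun w => (∑ i, (pdx i h w + pdy i h w) ^ 2) / h w
          + (1 + 2 * (hessNormInf U + 1 + 1 / σ) ^ 2) * (h w * Real.log (h w))) z
      - (2 * (∑ i, (pdx i h z + pdy i h z)
            * (pdx i (langevin U σ h) z + pdy i (langevin U σ h) z)) / h z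
        - (∑ i, (pdx i h z + pdy i h z) ^ 2) * langevin U σ h z / (h z) ^ 2
        + (1 + 2 * (hessNormInf U + 1 + 1 / σ) ^ 2) * (1 + Real.log (h z))
            * langevin U σ h z))
      ≥ (1 / 2) * ((∑ i, (pdx i h z) ^ 2) + ∑ i, (pdy i h z) ^ 2) / h z := by
  set K := hessNormInf U with hKdef
  set β := 1 + 2 * (K + 1 + 1 / σ) ^ 2 with hβ
  have hs : 0 < 1 / σ := by positivity
  have hKle : Real.sqrt (∑ i, ∑ j, (hessU U i j z.1) ^ 2) ≤ K := le_ciSup hK z.1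
  have hz := hpos z
  have hA : ∀ (i : Fin d) (f : (Fin d → ℝ) × (Fin d → ℝ) → ℝ) w,
      pdx i f w + pdy i f w = dd (Pi.single i 1, Pi.single i 1) f w := by
    intro i f w
    simp only [pdx, pdy, dd]
    rw [← map_add]
    simp
  have sa : ∀ i : Fin d, ContDiff ℝ (⊤ : ℕ∞) (dd (Pi.single i 1, Pi.single i 1) h) :=
    fun i => dd_smooth _ hh
  have hi := inv_smooth hh hpos
  have hl := log_smooth hh hpos
  have hfun : (fun w => (∑ i, (pdx i h w + pdy i h w) ^ 2) / h w + β * (h w * Real.log (h w)))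
      = fun w => (∑ i, (dd (Pi.single i 1, Pi.single i 1) h w
          * dd (Pi.single i 1, Pi.single i 1) h w) * (h w)⁻¹) + β * (h w * Real.log (h w)) := by
    funext w
    simp only [hA, div_eq_mul_inv, Finset.sum_mul, sq]
  have st : ∀ i : Fin d, ContDiff ℝ (⊤ : ℕ∞) (fun w => (dd (Pi.single i 1, Pi.single i 1) h w
          * dd (Pi.single i 1, Pi.single i 1) h w) * (h w)⁻¹) :=
    fun i => ((sa i).mul (sa i)).mul hi
  have hL : langevin U σ
      (fun w => (∑ i, (pdx i h w + pdy i h w) ^ 2) / h w + β * (h w * Real.log (h w))) z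
      = ∑ i, langevin U σ (fun w => (dd (Pi.single i 1, Pi.single i 1) h w
          * dd (Pi.single i 1, Pi.single i 1) h w) * (h w)⁻¹) z
        + β * ((1 + Real.log (h z)) * langevin U σ h z + (h z)⁻¹ * ∑ i, pdy i h z ^ 2) := by
    rw [hfun, lang_add U σ (ContDiff.sum fun i _ => st i) (contDiff_const.mul (hh.mul hl)),
      lang_sum U σ _ st, lang_mul U σ contDiff_const (hh.mul hl), lang_mul U σ hh hl,
      lang_log U σ hh hpos, lang_const]
    have e1 : ∑ i, pdy i (fun _ => β) z * pdy i (fun w => h w * Real.log (h w)) z = 0 := by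
      simp [pdy_eq_dd, dd_const]
    have e2 : ∑ i, pdy i h z * pdy i (fun w => Real.log (h w)) z
        = (h z)⁻¹ * ∑ i, pdy i h z ^ 2 := by
      rw [Finset.mul_sum]
      refine Finset.sum_congr rfl fun i _ => ?_
      simp only [pdy_eq_dd, dd_log _ hh hpos]
      ring
    rw [e1, e2]
    have hz' := hz.ne'
    field_simp
    ring
  have hsq := Finset.sum_le_sum fun i (_ : i ∈ (Finset.univ : Finset (Fin d))) =>
    lang_sq_div U σ (sa i) hh hpos z
  have halg := final_alg (fun i k => hessU U i k z.1) (fun i => pdx i h z) (fun i => pdy i h z)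
    K (1 / σ) hKle hs
  have hcomm : ∑ i, (pdx i h z + pdy i h z)
      * (pdx i (langevin U σ h) z + pdy i (langevin U σ h) z)
      = ∑ i, dd (Pi.single i 1, Pi.single i 1) h z
          * langevin U σ (dd (Pi.single i 1, Pi.single i 1) h) z
        - ∑ i, (pdx i h z + pdy i h z) * (pdx i h z - (∑ k, hessU U i k z.1 * pdy k h z)
          + pdy i h z * (1 / σ)) := by
    rw [← Finset.sum_sub_distrib]
    refine Finset.sum_congr rfl fun i _ => ?_
    rw [hA i (langevin U σ h), dd_lang U hU σ hh, hA]
    ring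
  have hsum : ∑ i : Fin d, (2 * dd (Pi.single i 1, Pi.single i 1) h z
        * langevin U σ (dd (Pi.single i 1, Pi.single i 1) h) z * (h z)⁻¹
        - dd (Pi.single i 1, Pi.single i 1) h z ^ 2 * langevin U σ h z * (h z)⁻¹ ^ 2)
      = 2 * (∑ i, dd (Pi.single i 1, Pi.single i 1) h z
          * langevin U σ (dd (Pi.single i 1, Pi.single i 1) h) z) * (h z)⁻¹
        - (∑ i, (pdx i h z + pdy i h z) ^ 2) * langevin U σ h z * (h z)⁻¹ ^ 2 := by
    simp only [hA, Finset.sum_sub_distrib, Finset.mul_sum, Finset.sum_mul, mul_assoc]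
  rw [hsum] at hsq
  rw [hL, hcomm]
  have hm := mul_le_mul_of_nonneg_right halg (inv_pos.mpr hz).le
  simp only [← hβ] at hm
  simp only [div_eq_mul_inv _ (h z), div_eq_mul_inv _ (h z ^ 2), ← inv_pow] at *
  linarith
end
end
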